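/- Let R be a regular domain with a generalized regular system of parameters x = x_1,…,x_p, and let I ⊆ R be an ideal. Then Γ_x(I̅) ⊆ Γ_x(overline{I_0}), i.e., the Newton polyhedron of the integral closure of I is contained in the Newton polyhedron of the integral closure of I_0. -/

import Mathlib

open Ideal Set Pointwise

noncomputable section

namespace NND

variable {R : Type*} [CommRing R] {p : ℕ}

/-- The monomial `x^a = x 0 ^ a 0 * ⋯` in the elements `x`. -/
def mono (x : Fin p → R) (a : Fin p → ℕ) : R := ∏ i, x i ^ a i

/-- A (commutative) ring is regular local if it is Noetherian local and its maximal ideal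
can be generated by `dim R` elements. -/
def IsRegularLocal (A : Type*) [CommRing A] : Prop :=
  IsNoetherianRing A ∧ ∃ h : IsLocalRing A, ∃ s : Finset A,
    Ideal.span (s : Set A) = @IsLocalRing.maximalIdeal A _ h ∧
    (s.card : WithBot (WithTop ℕ)) = ringKrullDim A

/-- A regular domain: an integral domain whose localization at every prime is regular local. -/
def IsRegularDomain (A : Type*) [CommRing A] : Prop :=
  IsDomain A ∧ ∀ (P : Ideal A) (hP : P.IsPrime), IsRegularLocal (@Localization.AtPrime A _ P hP)

/-- `x` is a regular sequence. -/
def IsRegSeq (x : Fin p → R) : Prop :=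
  Ideal.span (Set.range x) ≠ ⊤ ∧
  ∀ i : Fin p, ∀ r : R, r * x i ∈ Ideal.span (x '' {j | j < i}) →
    r ∈ Ideal.span (x '' {j | j < i})

/-- A generalized regular system of parameters: a permutable regular sequence all of whose
subquotients are regular domains. -/
def IsGRSOP (x : Fin p → R) : Prop :=
  (∀ σ : Equiv.Perm (Fin p), IsRegSeq (x ∘ σ)) ∧
  ∀ S : Set (Fin p), IsRegularDomain (R ⧸ Ideal.span (x '' S))

/-- `A` is the exponent set of a monomial representation of `f`:
`h * f = ∑_{a ∈ A} r a * x^a` with `h` and the `r a` outside `(x_1, …, x_p)`. -/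
def IsMonRep (x : Fin p → R) (f : R) (A : Finset (Fin p → ℕ)) : Prop :=
  ∃ (h : R) (r : (Fin p → ℕ) → R),
    h ∉ Ideal.span (Set.range x) ∧ (∀ a ∈ A, r a ∉ Ideal.span (Set.range x)) ∧
    h * f = ∑ a ∈ A, r a * mono x a

/-- A minimal (irredundant) monomial representation: no monomial divides another. -/
def IsMinMonRep (x : Fin p → R) (f : R) (A : Finset (Fin p → ℕ)) : Prop :=
  IsMonRep x f A ∧ ∀ a ∈ A, ∀ b ∈ A, a ≠ b → ¬ mono x a ∣ mono x b

open Classical in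
/-- The support of `f`: the exponent set of its (unique) minimal monomial representation. -/
def supp (x : Fin p → R) (f : R) : Set (Fin p → ℕ) :=
  if h : ∃ A : Finset (Fin p → ℕ), IsMinMonRep x f A then ↑h.choose else ∅

/-- Embedding of exponent vectors into `ℝ^p`. -/
def toR (a : Fin p → ℕ) : Fin p → ℝ := fun i => (a i : ℝ)

/-- The Newton polyhedron of a set of ring elements. -/
def Γ (x : Fin p → R) (S : Set R) : Set (Fin p → ℝ) :=
  convexHull ℝ (toR '' ⋃ f ∈ S, supp x f)

/-- The Newton polyhedron `Γ_x(I)` of an ideal. -/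
def ΓI (x : Fin p → R) (I : Ideal R) : Set (Fin p → ℝ) := Γ x (I : Set R)

/-- The Newton polyhedron `Γ_x(f)` of an element: that of the principal ideal `(f)`. -/
def ΓE (x : Fin p → R) (f : R) : Set (Fin p → ℝ) := ΓI x (Ideal.span {f})

/-- The integral closure of an ideal `I`: elements satisfying an equation of integral
dependence `f^n + a_1 f^{n-1} + ⋯ + a_n = 0` with `a_i ∈ I^i`. -/
def intClosure (I : Ideal R) : Set R :=
  {f | ∃ n : ℕ, 0 < n ∧ ∃ a : ℕ → R, (∀ i ∈ Finset.Icc 1 n, a i ∈ I ^ i) ∧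
    f ^ n + ∑ i ∈ Finset.Icc 1 n, a i * f ^ (n - i) = 0}

/-- The monomial ideal `I_0` spanned by the lattice points of `Γ_x(I)`. -/
def idealZero (x : Fin p → R) (I : Ideal R) : Ideal R :=
  Ideal.span (mono x '' {a | toR a ∈ ΓI x I})

/-- The ideal `K_I` generated by the monomials lying in the integral closure of `I`. -/
def KIdeal (x : Fin p → R) (I : Ideal R) : Ideal R :=
  Ideal.span {m | (∃ a : Fin p → ℕ, m = mono x a) ∧ m ∈ intClosure I}

/-!
Fix the prime ideal `Q = (x_1, …, x_p)`. Since any sequence of powers of the `x_i` is again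
permutable and weakly regular, a unit multiple of `x^b` never lies in the ideal
`(x_1^(b_1 + 1), …, x_p^(b_p + 1))` locally at `Q`. Consequently the exponents `b` such that `g` is
not in this ideal locally at `Q` form an upper set, whose minimal elements are the exponents of any
minimal monomial representation of `g`; Krull's intersection theorem provides such a representation.

Let `a` be an exponent of `f ∈ I̅` outside `Γ_x(I)`. The Newton polyhedron of `I` is closed and
stable under adding nonnegative vectors, so a weight `w ≥ 0` separates it from `a`; breaking ties
lexicographically turns `w` into a monotone and injective additive order on exponents. Let `a₀` be
the least exponent of `f` in this order. Then, locally at `Q`, `I` lies in the ideal `J` generated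
by the monomials larger than `x^a₀`, and `f` is congruent modulo `J` to a unit multiple of `x^a₀`.
The integral equation of `f` over `I` forces a unit multiple of `x^((n+1)a₀)` to be a combination of
monomials of larger weight, which is impossible. So every exponent `a` of an element of `I̅`
satisfies `x^a ∈ I_0`.
-/

section PermWeaklyRegular

variable {ι : Type*}

/-- A family is a permutable weakly regular sequence if each member is a nonzerodivisor modulo
the ideal generated by any set of other members. Unlike `IsRegSeq`, this does not refer to an
ordering of the index type, and the ideal generated by the family may be the unit ideal. -/
def PermWeaklyRegular (x : ι → R) : Prop :=
  ∀ (S : Set ι) (i : ι), i ∉ S → IsSMulRegular (R ⧸ span (x '' S)) (x i)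

theorem exists_perm_image_setOf_lt_eq {S : Set (Fin p)} {i : Fin p} (hi : i ∉ S) :
    ∃ (σ : Equiv.Perm (Fin p)) (l : Fin p), σ l = i ∧ σ '' {j | j < l} = S := by
  classical
  -- Sort the indices so that those in `S` come first, followed by `i`.
  let rank : Fin p → ℕ := fun j ↦ if j ∈ S then 0 else if j = i then 1 else 2
  let σ := Tuple.sort rank
  have hmono : Monotone (rank ∘ σ) := Tuple.monotone_sort rank
  refine ⟨σ, σ.symm i, σ.apply_symm_apply i, ?_⟩
  ext j
  rw [σ.image_eq_preimage_symm]
  change σ.symm j < σ.symm i ↔ j ∈ S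
  constructor
  · intro hlt
    have hji : j ≠ i := fun h ↦ (h ▸ hlt).false
    by_contra hj
    simpa [rank, hi, hj, hji] using hmono hlt.le
  · intro hj
    by_contra! hle
    simpa [rank, hi, hj] using hmono hle

theorem permWeaklyRegular_of_forall_perm {x : Fin p → R}
    (hx : ∀ σ : Equiv.Perm (Fin p), IsRegSeq (x ∘ σ)) : PermWeaklyRegular x := by
  intro S i hi
  obtain ⟨σ, l, rfl, rfl⟩ := exists_perm_image_setOf_lt_eq hi
  have hreg := (hx σ).2 l
  rw [image_comp] at hreg
  rw [isSMulRegular_quotient_iff_mem_of_smul_mem]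
  exact fun r hr ↦ hreg r (by rwa [mul_comm])

theorem mem_span_singleton_sup_iff_sub_mem {J : Ideal R} {y z : R} :
    z ∈ span {y} ⊔ J ↔ ∃ s, z - s * y ∈ J := by
  rw [mem_span_singleton_sup]
  exact ⟨fun ⟨s, b, hb, h⟩ ↦ ⟨s, by rwa [← h, add_sub_cancel_left]⟩,
    fun ⟨s, hs⟩ ↦ ⟨s, _, hs, add_sub_cancel _ _⟩⟩

theorem isSMulRegular_quotient_span_pow_sup {J : Ideal R} {x y : R}
    (hx : IsSMulRegular (R ⧸ J) x) (hy : IsSMulRegular (R ⧸ (span {x} ⊔ J)) y) (n : ℕ) :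
    IsSMulRegular (R ⧸ (span {x ^ n} ⊔ J)) y := by
  simp only [isSMulRegular_quotient_iff_mem_of_smul_mem, smul_eq_mul,
    mem_span_singleton_sup_iff_sub_mem] at hx hy ⊢
  induction n with
  | zero => exact fun r _ ↦ ⟨r, by simp⟩
  | succ n ih =>
    rintro r ⟨s, hs⟩
    obtain ⟨t, ht⟩ := hy r ⟨s * x ^ n, by convert hs using 1; ring⟩
    have hdiff : y * t - s * x ^ n ∈ J :=
      hx _ (by convert J.sub_mem hs (J.mul_mem_left y ht) using 1; ring)
    obtain ⟨v, hv⟩ := ih t ⟨s, hdiff⟩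
    exact ⟨v, by convert J.add_mem ht (J.mul_mem_left x hv) using 1; ring⟩

theorem span_update_image [DecidableEq ι] (x : ι → R) (y : R) {S : Set ι} {k : ι} (hk : k ∈ S) :
    span (Function.update x k y '' S) = span {y} ⊔ span (x '' (S \ {k})) := by
  rw [← insert_sdiff_self_of_mem hk, image_insert_eq, Function.update_self, span_insert,
    insert_sdiff_self_of_mem hk]
  congr 2
  exact image_congr fun j hj ↦ Function.update_of_ne hj.2 ..

theorem span_image_eq_sup_diff_singleton (x : ι → R) {S : Set ι} {k : ι} (hk : k ∈ S) :
    span (x '' S) = span {x k} ⊔ span (x '' (S \ {k})) := by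
  classical
  simpa using span_update_image x (x k) hk

variable {x : ι → R}

theorem PermWeaklyRegular.update_pow [DecidableEq ι] (hx : PermWeaklyRegular x) (k : ι) (n : ℕ) :
    PermWeaklyRegular (Function.update x k (x k ^ n)) := by
  intro S i hi
  by_cases hk : k ∈ S
  · have hik : i ≠ k := fun h ↦ hi (h ▸ hk)
    rw [span_update_image x _ hk, Function.update_of_ne hik]
    refine isSMulRegular_quotient_span_pow_sup (hx _ k (by simp)) ?_ n
    rw [← span_image_eq_sup_diff_singleton x hk]
    exact hx S i hi
  · have himage : Function.update x k (x k ^ n) '' S = x '' S :=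
      image_congr fun j hj ↦ Function.update_of_ne (ne_of_mem_of_not_mem hj hk) ..
    rw [himage]
    obtain rfl | hik := eq_or_ne i k
    · rw [Function.update_self]
      exact (hx S i hi).pow n
    · rw [Function.update_of_ne hik]
      exact hx S i hi

theorem PermWeaklyRegular.piecewise_pow [DecidableEq ι] (hx : PermWeaklyRegular x) (n : ι → ℕ)
    (T : Finset ι) : PermWeaklyRegular (T.piecewise (fun i ↦ x i ^ n i) x) := by
  induction T using Finset.induction_on with
  | empty => simpa using hx
  | insert k T hk ih =>
    rw [Finset.piecewise_insert]
    simpa [hk] using ih.update_pow k (n k)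

theorem PermWeaklyRegular.mem_span_of_mul_pow_mem [DecidableEq ι] (hx : PermWeaklyRegular x)
    {k : ι} {m : ℕ} {u : R}
    (hu : u * x k ^ m ∈ span (range (Function.update x k (x k ^ (m + 1))))) :
    u ∈ span (range x) := by
  rw [← image_univ, span_update_image x _ (mem_univ k), mem_span_singleton_sup_iff_sub_mem] at hu
  rw [← image_univ, span_image_eq_sup_diff_singleton x (mem_univ k),
    mem_span_singleton_sup_iff_sub_mem]
  obtain ⟨s, hs⟩ := hu
  have hreg := (hx (univ \ {k}) k (by simp)).pow m
  rw [isSMulRegular_quotient_iff_mem_of_smul_mem] at hreg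
  exact ⟨s, hreg _ (by convert hs using 1; rw [smul_eq_mul]; ring)⟩

theorem PermWeaklyRegular.mem_span_of_mul_prod_pow_mem [DecidableEq ι] (hx : PermWeaklyRegular x)
    (b : ι → ℕ) (T : Finset ι) {u : R}
    (hu : u * ∏ i ∈ T, x i ^ b i ∈ span (range (T.piecewise (fun i ↦ x i ^ (b i + 1)) x))) :
    u ∈ span (range x) := by
  induction T using Finset.induction_on with
  | empty => simpa using hu
  | insert k T hk ih =>
    refine ih ((hx.piecewise_pow (b + 1) T).mem_span_of_mul_pow_mem (k := k) (m := b k) ?_)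
    simpa [Finset.prod_insert hk, Finset.piecewise_insert, hk, mul_comm, mul_left_comm] using hu

end PermWeaklyRegular

section MonomialIdeal

variable (x : Fin p → R)

theorem mono_zero : mono x 0 = 1 := by simp [mono]

theorem mono_add (a b : Fin p → ℕ) : mono x (a + b) = mono x a * mono x b := by
  simp [mono, pow_add, Finset.prod_mul_distrib]

theorem mono_nsmul (n : ℕ) (a : Fin p → ℕ) : mono x (n • a) = mono x a ^ n := by
  simp [mono, mul_comm n, pow_mul, Finset.prod_pow]

theorem mono_single (i : Fin p) (n : ℕ) : mono x (Pi.single i n) = x i ^ n := by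
  simp [mono, Pi.single_apply, pow_ite]

variable {x} in
theorem mono_dvd_mono {a b : Fin p → ℕ} (h : a ≤ b) : mono x a ∣ mono x b :=
  Finset.prod_dvd_prod_of_dvd _ _ fun i _ ↦ pow_dvd_pow (x i) (h i)

/-- The ideal generated by the monomials with exponents in `C`. -/
def monomialIdeal (C : Set (Fin p → ℕ)) : Ideal R := span (mono x '' C)

variable {C D : Set (Fin p → ℕ)} {x}

theorem mono_mem_monomialIdeal {a : Fin p → ℕ} (ha : a ∈ C) : mono x a ∈ monomialIdeal x C :=
  subset_span (mem_image_of_mem _ ha)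

theorem sum_mul_mono_mem_monomialIdeal {A : Finset (Fin p → ℕ)} (hA : ↑A ⊆ C)
    (r : (Fin p → ℕ) → R) : ∑ a ∈ A, r a * mono x a ∈ monomialIdeal x C :=
  sum_mem fun _ ha ↦ mul_mem_left _ _ (mono_mem_monomialIdeal (hA ha))

theorem exists_sum_eq_of_mem_monomialIdeal {A : Finset (Fin p → ℕ)} {g : R}
    (hg : g ∈ monomialIdeal x (A : Set (Fin p → ℕ))) :
    ∃ r : (Fin p → ℕ) → R, ∑ a ∈ A, r a * mono x a = g := by
  simpa using (Submodule.mem_span_image_finset_iff_exists_fun' R).1 hg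

theorem monomialIdeal_mono (h : C ⊆ D) : monomialIdeal x C ≤ monomialIdeal x D :=
  span_mono (image_mono h)

variable (x) in
theorem monomialIdeal_mul (C D : Set (Fin p → ℕ)) :
    monomialIdeal x C * monomialIdeal x D = monomialIdeal x (C + D) := by
  rw [monomialIdeal, monomialIdeal, monomialIdeal, span_mul_span', ← image2_mul, ← image2_add,
    image_image2_distrib (mono_add x)]

theorem monomialIdeal_upperClosure :
    monomialIdeal x (upperClosure C) = monomialIdeal x C := by
  refine le_antisymm (span_le.2 ?_) (monomialIdeal_mono subset_upperClosure)
  rintro _ ⟨b, ⟨a, ha, hab⟩, rfl⟩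
  exact mem_of_dvd _ (mono_dvd_mono hab) (mono_mem_monomialIdeal ha)

variable (x) in
theorem monomialIdeal_setOf_not_le (b : Fin p → ℕ) :
    monomialIdeal x {c | ¬c ≤ b} = span (range fun i ↦ x i ^ (b i + 1)) := by
  apply le_antisymm <;> refine span_le.2 ?_
  · rintro _ ⟨c, hc, rfl⟩
    obtain ⟨i, hi⟩ : ∃ i, b i < c i := by simpa [Pi.le_def] using hc
    have hdvd : x i ^ (b i + 1) ∣ mono x c :=
      (pow_dvd_pow _ hi).trans (Finset.dvd_prod_of_mem (fun i ↦ x i ^ c i) (Finset.mem_univ i))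
    exact mem_of_dvd _ hdvd (subset_span (mem_range_self i))
  · rintro _ ⟨i, rfl⟩
    beta_reduce
    rw [← mono_single]
    refine mono_mem_monomialIdeal fun h ↦ ?_
    simpa using h i

theorem mul_mono_mem_monomialIdeal_add_single {r : R} (hr : r ∈ span (range x))
    (a : Fin p → ℕ) :
    r * mono x a ∈ monomialIdeal x (range fun i ↦ a + Pi.single i 1) := by
  obtain ⟨c, rfl⟩ := mem_span_range_iff_exists_fun.1 hr
  rw [Finset.sum_mul]
  refine sum_mem fun i _ ↦ ?_
  have hshift : c i * x i * mono x a = c i * mono x (a + Pi.single i 1) := by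
    rw [mono_add, mono_single]; ring
  rw [hshift]
  exact mul_mem_left _ _ (mono_mem_monomialIdeal (mem_range_self i))

theorem mul_mono_mem_monomialIdeal_not_le {r : R} (hr : r ∈ span (range x))
    (a : Fin p → ℕ) : r * mono x a ∈ monomialIdeal x {c | ¬c ≤ a} := by
  refine monomialIdeal_mono ?_ (mul_mono_mem_monomialIdeal_add_single hr a)
  rintro _ ⟨i, rfl⟩ h
  simpa using h i

theorem monomialIdeal_degree_le_pow (M : ℕ) :
    monomialIdeal x {a | ∑ i, a i = M} ≤ span (range x) ^ M := by
  refine span_le.2 ?_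
  rintro _ ⟨a, rfl, rfl⟩
  rw [← Finset.prod_pow_eq_pow_sum]
  exact Ideal.prod_mem_prod fun i _ ↦ pow_mem_pow (subset_span (mem_range_self i)) _

theorem PermWeaklyRegular.mem_span_of_mul_mono_mem (hx : PermWeaklyRegular x) {b : Fin p → ℕ}
    {u : R} (hu : u * mono x b ∈ monomialIdeal x {c | ¬c ≤ b}) : u ∈ span (range x) := by
  refine hx.mem_span_of_mul_prod_pow_mem b Finset.univ ?_
  rwa [Finset.piecewise_univ, ← monomialIdeal_setOf_not_le]

end MonomialIdeal

section LocalMonomialIdeal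

variable (x : Fin p → R) [(span (range x)).IsPrime]

/-- The contraction to `R` of the extension of a monomial ideal to the localization of `R` at the
prime `(x_1, …, x_p)`. Working with it instead of `monomialIdeal` absorbs the denominators `h` of
monomial representations. -/
def localMonomialIdeal (C : Set (Fin p → ℕ)) : Ideal R :=
  ((monomialIdeal x C).map (algebraMap R (Localization.AtPrime (span (range x))))).comap
    (algebraMap R (Localization.AtPrime (span (range x))))

variable {x} {C D : Set (Fin p → ℕ)}

theorem mem_localMonomialIdeal_iff {g : R} :
    g ∈ localMonomialIdeal x C ↔ ∃ h ∉ span (range x), h * g ∈ monomialIdeal x C :=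
  IsLocalization.algebraMap_mem_map_algebraMap_iff (span (range x)).primeCompl ..

theorem monomialIdeal_le_localMonomialIdeal : monomialIdeal x C ≤ localMonomialIdeal x C :=
  le_comap_map

theorem localMonomialIdeal_mono (h : C ⊆ D) : localMonomialIdeal x C ≤ localMonomialIdeal x D :=
  comap_mono (map_mono (monomialIdeal_mono h))

theorem localMonomialIdeal_mul_le :
    localMonomialIdeal x C * localMonomialIdeal x D ≤ localMonomialIdeal x (C + D) := by
  unfold localMonomialIdeal
  rw [← monomialIdeal_mul, Ideal.map_mul]
  exact le_comap_mul _

theorem mul_mem_localMonomialIdeal_iff {h g : R} (hh : h ∉ span (range x)) :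
    h * g ∈ localMonomialIdeal x C ↔ g ∈ localMonomialIdeal x C := by
  refine ⟨fun hg ↦ ?_, mul_mem_left _ h⟩
  obtain ⟨h', hh', hg⟩ := mem_localMonomialIdeal_iff.1 hg
  exact mem_localMonomialIdeal_iff.2 ⟨h' * h, IsPrime.mul_notMem ‹_› hh' hh, by rwa [mul_assoc]⟩

theorem PermWeaklyRegular.mul_mono_mem_localMonomialIdeal_not_le_iff (hx : PermWeaklyRegular x)
    {b : Fin p → ℕ} {u : R} :
    u * mono x b ∈ localMonomialIdeal x {c | ¬c ≤ b} ↔ u ∈ span (range x) := by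
  refine ⟨fun hu ↦ ?_, fun hu ↦
    monomialIdeal_le_localMonomialIdeal (mul_mono_mem_monomialIdeal_not_le hu b)⟩
  obtain ⟨h, hh, hu⟩ := mem_localMonomialIdeal_iff.1 hu
  rw [← mul_assoc] at hu
  exact (IsPrime.mem_or_mem ‹_› (hx.mem_span_of_mul_mono_mem hu)).resolve_left hh

theorem PermWeaklyRegular.exists_le_of_mul_mono_mem (hx : PermWeaklyRegular x)
    {b : Fin p → ℕ} {u : R} (hu : u ∉ span (range x))
    (hmem : u * mono x b ∈ localMonomialIdeal x C) : ∃ c ∈ C, c ≤ b := by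
  by_contra! hC
  exact hu (hx.mul_mono_mem_localMonomialIdeal_not_le_iff.1 (localMonomialIdeal_mono hC hmem))

theorem one_notMem_span_range : (1 : R) ∉ span (range x) :=
  (ne_top_iff_one _).1 (IsPrime.ne_top ‹_›)

theorem PermWeaklyRegular.mono_dvd_mono_iff (hx : PermWeaklyRegular x) {a b : Fin p → ℕ} :
    mono x a ∣ mono x b ↔ a ≤ b := by
  refine ⟨fun h ↦ ?_, mono_dvd_mono⟩
  have hmem : 1 * mono x b ∈ localMonomialIdeal x {a} := monomialIdeal_le_localMonomialIdeal <| by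
    rw [one_mul]
    exact mem_of_dvd _ h (mono_mem_monomialIdeal rfl)
  simpa using hx.exists_le_of_mul_mono_mem one_notMem_span_range hmem

theorem PermWeaklyRegular.sum_mem_localMonomialIdeal_not_le_iff (hx : PermWeaklyRegular x)
    {A : Finset (Fin p → ℕ)} (hA : IsAntichain (· ≤ ·) (A : Set (Fin p → ℕ)))
    {a : Fin p → ℕ} (ha : a ∈ A) (r : (Fin p → ℕ) → R) :
    ∑ c ∈ A, r c * mono x c ∈ localMonomialIdeal x {c | ¬c ≤ a} ↔ r a ∈ span (range x) := by
  classical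
  rw [← Finset.add_sum_erase A _ ha, Ideal.add_mem_iff_left,
    hx.mul_mono_mem_localMonomialIdeal_not_le_iff]
  refine monomialIdeal_le_localMonomialIdeal (sum_mul_mono_mem_monomialIdeal (fun c hc ↦ ?_) r)
  obtain ⟨hca, hcA⟩ := Finset.mem_erase.1 (Finset.mem_coe.1 hc)
  exact hA hcA ha hca

end LocalMonomialIdeal

section Minimal

variable {α : Type*} [PartialOrder α]

theorem finite_setOf_minimal_mem [WellQuasiOrderedLE α] (s : Set α) :
    {a | Minimal (· ∈ s) a}.Finite :=
  WellQuasiOrderedLE.finite_of_isAntichain (setOfPred_minimal_antichain _)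

theorem upperClosure_setOf_minimal_mem [WellFoundedLT α] (s : UpperSet α) :
    upperClosure {a | Minimal (· ∈ s) a} = s := by
  ext b
  refine ⟨fun ⟨a, ha, hab⟩ ↦ s.upper hab ha.prop, fun hb ↦ ?_⟩
  obtain ⟨a, hab, ha⟩ := exists_minimal_le_of_wellFoundedLT (· ∈ s) b hb
  exact ⟨a, ha, hab⟩

end Minimal

theorem mem_of_forall_mem_sup_pow {A : Type*} [CommRing A] [IsNoetherianRing A] [IsLocalRing A]
    {J m : Ideal A} (hm : m ≠ ⊤) {z : A} (hz : ∀ M : ℕ, z ∈ J ⊔ m ^ M) : z ∈ J := by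
  rw [← Ideal.Quotient.eq_zero_iff_mem, ← Submodule.mem_bot A,
    ← iInf_pow_smul_eq_bot_of_isLocalRing m hm, Submodule.mem_iInf]
  intro M
  obtain ⟨j, hj, q, hq, rfl⟩ := Submodule.mem_sup.1 (hz M)
  have hmk : Ideal.Quotient.mk J (j + q) = q • (1 : A ⧸ J) := by
    rw [map_add, Ideal.Quotient.eq_zero_iff_mem.2 hj, zero_add, Algebra.smul_def, mul_one]
    rfl
  rw [hmk]
  exact Submodule.smul_mem_smul hq trivial

theorem isAntichain_setOf_degree_eq (M : ℕ) :
    IsAntichain (· ≤ ·) {a : Fin p → ℕ | ∑ i, a i = M} := by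
  rintro a rfl b hb hne hab
  exact hb.not_gt (Fintype.sum_strictMono (hab.lt_of_ne hne))

theorem finite_setOf_degree_eq (M : ℕ) : {a : Fin p → ℕ | ∑ i, a i = M}.Finite :=
  WellQuasiOrderedLE.finite_of_isAntichain (isAntichain_setOf_degree_eq M)

section Support

variable {x : Fin p → R} {g : R} {A : Finset (Fin p → ℕ)}

theorem IsMinMonRep.isAntichain (hA : IsMinMonRep x g A) :
    IsAntichain (· ≤ ·) (A : Set (Fin p → ℕ)) :=
  fun a ha b hb hne hab ↦ hA.2 a ha b hb hne (mono_dvd_mono hab)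

variable [(span (range x)).IsPrime]

variable (x g) in
/-- The upper closure of the support of `g`, described without reference to a monomial
representation: `b` belongs to it iff `g` is not in `(x_1^(b_1 + 1), …, x_p^(b_p + 1))` locally at
`(x_1, …, x_p)`. -/
def upperSupp : UpperSet (Fin p → ℕ) where
  carrier := {b | g ∉ localMonomialIdeal x {c | ¬c ≤ b}}
  upper' _ _ hab ha hb :=
    ha (localMonomialIdeal_mono (ofPred_subset_ofPred.2 fun _ hc h ↦ hc (h.trans hab)) hb)

theorem mem_upperSupp_iff {b : Fin p → ℕ} :
    b ∈ upperSupp x g ↔ g ∉ localMonomialIdeal x {c | ¬c ≤ b} := Iff.rfl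

theorem IsMinMonRep.upperClosure_eq (hx : PermWeaklyRegular x) (hA : IsMinMonRep x g A) :
    upperClosure (A : Set (Fin p → ℕ)) = upperSupp x g := by
  obtain ⟨h, r, hh, hr, hsum⟩ := hA.1
  have hle : ∀ a ∈ A, a ∈ upperSupp x g := fun a ha ↦ by
    rw [mem_upperSupp_iff, ← mul_mem_localMonomialIdeal_iff hh, hsum,
      hx.sum_mem_localMonomialIdeal_not_le_iff hA.isAntichain ha]
    exact hr a ha
  ext b
  refine ⟨fun ⟨a, ha, hab⟩ ↦ (upperSupp x g).upper hab (hle a ha), fun hb ↦ ?_⟩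
  contrapose! hb
  change b ∉ upperSupp x g
  rw [mem_upperSupp_iff, not_not, ← mul_mem_localMonomialIdeal_iff hh, hsum]
  exact monomialIdeal_le_localMonomialIdeal
    (sum_mul_mono_mem_monomialIdeal (fun a ha hab ↦ hb ⟨a, ha, hab⟩) r)

theorem IsMinMonRep.coe_eq (hx : PermWeaklyRegular x) (hA : IsMinMonRep x g A) :
    (A : Set (Fin p → ℕ)) = {a | Minimal (· ∈ upperSupp x g) a} := by
  ext a
  rw [← hA.upperClosure_eq hx]
  exact hA.isAntichain.minimal_mem_upperClosure_iff_mem.symm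

theorem IsMinMonRep.supp_eq (hx : PermWeaklyRegular x) (hA : IsMinMonRep x g A) :
    supp x g = A := by
  have hex : ∃ A, IsMinMonRep x g A := ⟨A, hA⟩
  rw [supp, dif_pos hex, hex.choose_spec.coe_eq hx, hA.coe_eq hx]

theorem IsMinMonRep.mono_mul (hx : PermWeaklyRegular x) (hA : IsMinMonRep x g A)
    (d : Fin p → ℕ) : IsMinMonRep x (mono x d * g) (A.map (addRightEmbedding d)) := by
  obtain ⟨⟨h, r, hh, hr, hsum⟩, hmin⟩ := hA
  refine ⟨⟨h, fun b ↦ r (b - d), hh, by simpa using hr, ?_⟩, ?_⟩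
  · simp only [Finset.sum_map, addRightEmbedding_apply, add_tsub_cancel_right, mono_add]
    rw [mul_left_comm, hsum, Finset.mul_sum]
    exact Finset.sum_congr rfl fun a _ ↦ by ring
  · simpa [hx.mono_dvd_mono_iff] using hmin

theorem add_mem_supp_mono_mul (hx : PermWeaklyRegular x) {c : Fin p → ℕ} (hc : c ∈ supp x g)
    (d : Fin p → ℕ) : c + d ∈ supp x (mono x d * g) := by
  by_cases hex : ∃ A, IsMinMonRep x g A
  · obtain ⟨A, hA⟩ := hex
    rw [hA.supp_eq hx] at hc
    rw [(hA.mono_mul hx d).supp_eq hx]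
    simpa using hc
  · simp [supp, hex] at hc

theorem mem_supp_mono (hx : PermWeaklyRegular x) (a : Fin p → ℕ) : a ∈ supp x (mono x a) := by
  have hrep : IsMinMonRep x (mono x a) {a} :=
    ⟨⟨1, 1, one_notMem_span_range, fun _ _ ↦ one_notMem_span_range, by simp⟩, by simp⟩
  simp [hrep.supp_eq hx]

theorem mem_monomialIdeal_upperSupp_sup_degree (hx : PermWeaklyRegular x) (g : R) (M : ℕ) :
    g ∈ monomialIdeal x (upperSupp x g) ⊔ monomialIdeal x {a | ∑ i, a i = M} := by
  induction M with
  | zero =>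
    have htop : monomialIdeal x {a | ∑ i, a i = 0} = ⊤ :=
      (eq_top_iff_one _).2 (mono_zero x ▸ mono_mem_monomialIdeal (by simp))
    rw [htop, sup_top_eq]
    trivial
  | succ M ih =>
    obtain ⟨s, hs, q, hq, hsq⟩ := Submodule.mem_sup.1 ih
    rw [← (finite_setOf_degree_eq M).coe_toFinset] at hq
    obtain ⟨r, rfl⟩ := exists_sum_eq_of_mem_monomialIdeal hq
    nth_rewrite 2 [← hsq]
    refine add_mem (mem_sup_left hs) (sum_mem fun a ha ↦ ?_)
    by_cases haC : a ∈ upperSupp x g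
    · exact mem_sup_left (mul_mem_left _ _ (mono_mem_monomialIdeal haC))
    have hs' : s ∈ localMonomialIdeal x {c | ¬c ≤ a} := monomialIdeal_le_localMonomialIdeal <|
      monomialIdeal_mono (fun c hc hca ↦ haC ((upperSupp x g).upper hca hc)) hs
    have hra : r a ∈ span (range x) := by
      rw [mem_upperSupp_iff, not_not, ← hsq, Ideal.add_mem_iff_right _ hs'] at haC
      refine (hx.sum_mem_localMonomialIdeal_not_le_iff ?_ ha r).1 haC
      simpa using isAntichain_setOf_degree_eq M
    refine mem_sup_right (monomialIdeal_mono ?_ (mul_mono_mem_monomialIdeal_add_single hra a))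
    rintro _ ⟨i, rfl⟩
    have hdeg : ∑ i, a i = M := by simpa using ha
    simp [Finset.sum_add_distrib, hdeg]

variable [IsNoetherianRing (Localization.AtPrime (span (range x)))]

theorem mem_localMonomialIdeal_upperSupp (hx : PermWeaklyRegular x) (g : R) :
    g ∈ localMonomialIdeal x (upperSupp x g) := by
  set Q := span (range x)
  let loc := algebraMap R (Localization.AtPrime Q)
  have hQ : Q.map loc ≠ ⊤ := by
    rw [Localization.AtPrime.map_eq_maximalIdeal]
    exact IsPrime.ne_top'
  refine mem_comap.2 (mem_of_forall_mem_sup_pow hQ fun M ↦ ?_)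
  rw [← Ideal.map_pow, ← Ideal.map_sup]
  have hle : monomialIdeal x (upperSupp x g) ⊔ monomialIdeal x {a | ∑ i, a i = M} ≤
      monomialIdeal x (upperSupp x g) ⊔ Q ^ M := sup_le_sup le_rfl (monomialIdeal_degree_le_pow M)
  exact mem_map_of_mem loc (hle (mem_monomialIdeal_upperSupp_sup_degree hx g M))

theorem exists_isMinMonRep (hx : PermWeaklyRegular x) (g : R) : ∃ A, IsMinMonRep x g A := by
  let A := (finite_setOf_minimal_mem (upperSupp x g : Set (Fin p → ℕ))).toFinset
  have hcoe : (A : Set (Fin p → ℕ)) = {a | Minimal (· ∈ upperSupp x g) a} :=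
    Set.Finite.coe_toFinset _
  have hanti : IsAntichain (· ≤ ·) (A : Set (Fin p → ℕ)) :=
    hcoe ▸ setOfPred_minimal_antichain _
  obtain ⟨h, hh, hg⟩ := mem_localMonomialIdeal_iff.1 (mem_localMonomialIdeal_upperSupp hx g)
  rw [← upperClosure_setOf_minimal_mem (upperSupp x g), monomialIdeal_upperClosure, ← hcoe] at hg
  obtain ⟨r, hr⟩ := exists_sum_eq_of_mem_monomialIdeal hg
  refine ⟨A, ⟨h, r, hh, fun a ha hra ↦ ?_, hr.symm⟩, fun a ha b hb hne hdvd ↦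
    hanti ha hb hne (hx.mono_dvd_mono_iff.1 hdvd)⟩
  rw [← hx.sum_mem_localMonomialIdeal_not_le_iff hanti ha, hr,
    mul_mem_localMonomialIdeal_iff hh] at hra
  have hmin : Minimal (· ∈ upperSupp x g) a := by
    rwa [← Finset.mem_coe, hcoe] at ha
  exact hmin.prop hra

theorem upperClosure_supp (hx : PermWeaklyRegular x) (g : R) :
    upperClosure (supp x g) = upperSupp x g := by
  obtain ⟨A, hA⟩ := exists_isMinMonRep hx g
  rw [hA.supp_eq hx, hA.upperClosure_eq hx]

theorem mem_localMonomialIdeal_supp (hx : PermWeaklyRegular x) (g : R) :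
    g ∈ localMonomialIdeal x (supp x g) := by
  have hg := mem_localMonomialIdeal_upperSupp hx g
  rwa [← upperClosure_supp hx, localMonomialIdeal, monomialIdeal_upperClosure] at hg

end Support

section IntegralClosure

variable {I J K : Ideal R} {f g : R}

theorem subset_intClosure (I : Ideal R) : (I : Set R) ⊆ intClosure I := by
  refine fun f hf ↦ ⟨1, one_pos, fun _ ↦ -f, ?_, by simp⟩
  simpa using hf

theorem exists_pow_succ_mem_mul_pow_of_mem_intClosure (hf : f ∈ intClosure I) (hIK : I ≤ K)
    (hfK : f ∈ K) : ∃ n, f ^ (n + 1) ∈ I * K ^ n := by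
  obtain ⟨_ | n, hn, c, hc, hsum⟩ := hf
  · exact absurd hn (lt_irrefl 0)
  refine ⟨n, ?_⟩
  rw [eq_neg_of_add_eq_zero_left hsum, neg_mem_iff]
  refine sum_mem fun i hi ↦ ?_
  obtain ⟨hi₁, hi₂⟩ := Finset.mem_Icc.1 hi
  obtain ⟨j, rfl⟩ := Nat.exists_eq_add_of_le' hi₁
  have hcj : c (j + 1) ∈ I * K ^ j := by
    have hcI := hc _ hi
    rw [pow_succ'] at hcI
    exact Ideal.mul_mono_right (pow_right_mono hIK j) hcI
  have hsplit : I * K ^ n = I * K ^ j * K ^ (n + 1 - (j + 1)) := by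
    rw [mul_assoc, ← pow_add]; congr 2; lia
  rw [hsplit]
  exact mul_mem_mul hcj (pow_mem_pow hfK _)

theorem pow_succ_sub_pow_succ_mem_mul_pow (hf : f ∈ K) (hg : g ∈ K) (hfg : f - g ∈ J) (n : ℕ) :
    f ^ (n + 1) - g ^ (n + 1) ∈ J * K ^ n := by
  rw [← (Commute.all f g).mul_geom_sum₂]
  refine mul_mem_mul hfg (sum_mem fun i hi ↦ ?_)
  have hi' : n = i + (n + 1 - 1 - i) := by have := Finset.mem_range.1 hi; lia
  rw [hi', pow_add, ← hi']
  exact mul_mem_mul (pow_mem_pow hf _) (pow_mem_pow hg _)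

end IntegralClosure

section Weight

variable {x : Fin p → R} {L : Type*} [LinearOrder L]

theorem IsMonRep.exists_leading_term {φ : (Fin p → ℕ) → L} (hφ : Function.Injective φ) {f : R}
    {A : Finset (Fin p → ℕ)} (hA : IsMonRep x f A) {a : Fin p → ℕ} (ha : a ∈ A) :
    ∃ a₀, φ a₀ ≤ φ a ∧ ∃ h ∉ span (range x), ∃ r ∉ span (range x),
      h * f - r * mono x a₀ ∈ monomialIdeal x {b | φ a₀ < φ b} := by
  classical
  obtain ⟨h, r, hh, hr, hsum⟩ := hA
  obtain ⟨a₀, ha₀, hmin⟩ := A.exists_min_image φ ⟨a, ha⟩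
  refine ⟨a₀, hmin a ha, h, hh, r a₀, hr a₀ ha₀, ?_⟩
  rw [hsum, ← Finset.add_sum_erase A _ ha₀, add_sub_cancel_left]
  refine sum_mul_mono_mem_monomialIdeal (fun b hb ↦ ?_) r
  obtain ⟨hne, hbA⟩ := Finset.mem_erase.1 (Finset.mem_coe.1 hb)
  exact (hmin b hbA).lt_of_ne (hφ.ne hne.symm)

variable [(span (range x)).IsPrime] [AddCommMonoid L] [IsOrderedCancelAddMonoid L]

theorem localMonomialIdeal_lt_mul_le_pow_le (φ : (Fin p → ℕ) →+ L) (a : Fin p → ℕ) (n : ℕ) :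
    localMonomialIdeal x {b | φ a < φ b} * localMonomialIdeal x {b | φ a ≤ φ b} ^ n ≤
      localMonomialIdeal x {b | φ ((n + 1) • a) < φ b} := by
  induction n with
  | zero => simp
  | succ n ih =>
    rw [pow_succ, ← mul_assoc]
    refine (Ideal.mul_mono_left ih).trans (localMonomialIdeal_mul_le.trans ?_)
    refine localMonomialIdeal_mono ?_
    rintro _ ⟨b, hb, c, hc, rfl⟩
    change φ ((n + 1 + 1) • a) < φ (b + c)
    rw [succ_nsmul, map_add, map_add]
    exact add_lt_add_of_lt_of_le hb hc

variable [IsNoetherianRing (Localization.AtPrime (span (range x)))]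

theorem exists_mem_supp_le_of_mem_intClosure (hx : PermWeaklyRegular x) {φ : (Fin p → ℕ) →+ L}
    (hmono : Monotone φ) (hinj : Function.Injective φ) {I : Ideal R} {f : R}
    (hf : f ∈ intClosure I) {a : Fin p → ℕ} (ha : a ∈ supp x f) :
    ∃ g ∈ I, ∃ c ∈ supp x g, φ c ≤ φ a := by
  by_contra! hI
  obtain ⟨A, hA⟩ := exists_isMinMonRep hx f
  rw [hA.supp_eq hx] at ha
  obtain ⟨a₀, ha₀, h, hh, r, hr, hsub⟩ := hA.1.exists_leading_term hinj ha
  set J := localMonomialIdeal x {b | φ a₀ < φ b}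
  set K := localMonomialIdeal x {b | φ a₀ ≤ φ b}
  have hJK : J ≤ K := localMonomialIdeal_mono (ofPred_subset_ofPred.2 fun _ ↦ le_of_lt)
  have hIJ : I ≤ J := fun g hg ↦ localMonomialIdeal_mono
    (fun c hc ↦ ha₀.trans_lt (hI g hg c hc)) (mem_localMonomialIdeal_supp hx g)
  replace hsub : h * f - r * mono x a₀ ∈ J := monomialIdeal_le_localMonomialIdeal hsub
  have hlead : r * mono x a₀ ∈ K := monomialIdeal_le_localMonomialIdeal
    (mul_mem_left _ _ (mono_mem_monomialIdeal le_rfl))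
  have hhf : h * f ∈ K := by simpa using add_mem (hJK hsub) hlead
  obtain ⟨n, hn⟩ := exists_pow_succ_mem_mul_pow_of_mem_intClosure hf (hIJ.trans hJK)
    ((mul_mem_localMonomialIdeal_iff hh).1 hhf)
  have hhfpow : (h * f) ^ (n + 1) ∈ J * K ^ n :=
    mul_pow h f _ ▸ mul_mem_left _ _ (Ideal.mul_mono_left hIJ hn)
  have hleadpow : (r * mono x a₀) ^ (n + 1) ∈ J * K ^ n := by
    simpa using sub_mem hhfpow (pow_succ_sub_pow_succ_mem_mul_pow hhf hlead hsub n)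
  rw [mul_pow, ← mono_nsmul] at hleadpow
  obtain ⟨b, hb, hle⟩ := hx.exists_le_of_mul_mono_mem
    (fun hmem ↦ hr (IsPrime.mem_of_pow_mem ‹_› _ hmem))
    (localMonomialIdeal_lt_mul_le_pow_le φ a₀ n hleadpow)
  exact (hmono hle).not_gt hb

end Weight

section LexWeight

theorem toR_zero : toR (0 : Fin p → ℕ) = 0 := funext fun _ ↦ Nat.cast_zero

theorem toR_add (a b : Fin p → ℕ) : toR (a + b) = toR a + toR b :=
  funext fun _ ↦ Nat.cast_add _ _

theorem toR_monotone : Monotone (toR : (Fin p → ℕ) → Fin p → ℝ) :=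
  fun _ _ h i ↦ Nat.cast_le.2 (h i)

/-- The pairing of exponent vectors with `w`, refined by the lexicographic order. The refinement
makes it injective, so that every nonempty finite set of exponents has a single one of least
weight. -/
def lexWeight (w : Fin p → ℝ) : (Fin p → ℕ) →+ ℝ ×ₗ Lex (Fin p → ℕ) where
  toFun b := toLex (w ⬝ᵥ toR b, toLex b)
  map_zero' := by rw [toR_zero, dotProduct_zero]; rfl
  map_add' a b := by rw [toR_add, dotProduct_add]; rfl

theorem lexWeight_injective (w : Fin p → ℝ) : Function.Injective (lexWeight w) :=
  fun _ _ h ↦ toLex.injective (congrArg Prod.snd (congrArg ofLex h))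

theorem lexWeight_monotone {w : Fin p → ℝ} (hw : 0 ≤ w) : Monotone (lexWeight w) :=
  fun _ _ h ↦ Prod.Lex.toLex_mono
    ⟨dotProduct_le_dotProduct_of_nonneg_left (toR_monotone h) hw, Pi.toLex_monotone h⟩

theorem dotProduct_le_of_lexWeight_le {w : Fin p → ℝ} {a b : Fin p → ℕ}
    (h : lexWeight w a ≤ lexWeight w b) : w ⬝ᵥ toR a ≤ w ⬝ᵥ toR b :=
  Prod.Lex.monotone_fst _ _ h

end LexWeight

section Convexity

theorem exists_nonneg_forall_dotProduct_lt {ι : Type*} [Fintype ι] {T : Set (ι → ℝ)}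
    (hconv : Convex ℝ T) (hclosed : IsClosed T) (hT : T + Ici 0 ⊆ T) {z : ι → ℝ} (hz : z ∉ T) :
    ∃ w : ι → ℝ, 0 ≤ w ∧ ∀ t ∈ T, w ⬝ᵥ z < w ⬝ᵥ t := by
  classical
  obtain rfl | ⟨t₀, ht₀⟩ := T.eq_empty_or_nonempty
  · exact ⟨0, le_rfl, by simp⟩
  obtain ⟨ℓ, u, hzu, hu⟩ := geometric_hahn_banach_point_closed hconv hclosed hz
  let w : ι → ℝ := (dotProductEquiv ℝ ι).symm ℓ
  have hw : ∀ v, w ⬝ᵥ v = ℓ v :=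
    DFunLike.congr_fun ((dotProductEquiv ℝ ι).apply_symm_apply (ℓ : (ι → ℝ) →ₗ[ℝ] ℝ))
  refine ⟨w, fun i ↦ ?_, fun t ht ↦ by simpa only [hw] using hzu.trans (hu t ht)⟩
  -- If `w i < 0`, then `ℓ` is unbounded below on the ray from `t₀` in the direction `i`.
  by_contra! hneg
  obtain ⟨N, hN⟩ := Archimedean.arch (ℓ t₀ - u) (neg_pos.2 hneg)
  have hmem : t₀ + Pi.single i (N : ℝ) ∈ T :=
    hT (add_mem_add ht₀ (Pi.single_nonneg.2 N.cast_nonneg))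
  have hlt := hu _ hmem
  rw [map_add, ← hw (Pi.single _ _), dotProduct_single] at hlt
  rw [nsmul_eq_mul] at hN
  linarith

theorem Ici_zero_subset_convexHull_range_toR :
    Ici 0 ⊆ convexHull ℝ (range (toR : (Fin p → ℕ) → Fin p → ℝ)) := by
  have hrange : range (toR : (Fin p → ℕ) → Fin p → ℝ) = univ.pi fun _ ↦ range Nat.cast :=
    range_piMap _
  intro v hv
  rw [hrange]
  refine mem_convexHull_pi fun i _ ↦ ?_
  obtain ⟨N, hN⟩ := exists_nat_ge (v i)
  refine segment_subset_convexHull (mem_range_self 0) (mem_range_self N) ?_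
  rw [Nat.cast_zero, segment_eq_Icc N.cast_nonneg]
  exact ⟨hv i, hN⟩

theorem convexHull_toR_upperClosure (F : Set (Fin p → ℕ)) :
    convexHull ℝ (toR '' (upperClosure F : Set (Fin p → ℕ))) =
      convexHull ℝ (toR '' F) + Ici 0 := by
  apply Subset.antisymm
  · refine convexHull_min ?_ ((convex_convexHull ℝ _).add (convex_Ici 0))
    rintro _ ⟨b, ⟨a, ha, hab⟩, rfl⟩
    exact ⟨toR a, subset_convexHull ℝ _ (mem_image_of_mem _ ha), toR b - toR a,
      sub_nonneg.2 (toR_monotone hab), add_sub_cancel _ _⟩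
  · refine (add_subset_add_left Ici_zero_subset_convexHull_range_toR).trans ?_
    rw [← convexHull_add]
    refine convexHull_mono ?_
    rintro _ ⟨_, ⟨a, ha, rfl⟩, _, ⟨b, rfl⟩, rfl⟩
    exact ⟨a + b, ⟨a, ha, le_self_add⟩, toR_add a b⟩

theorem convexHull_toR_add_Ici_subset (P : UpperSet (Fin p → ℕ)) :
    convexHull ℝ (toR '' (P : Set (Fin p → ℕ))) + Ici 0 ⊆
      convexHull ℝ (toR '' (P : Set (Fin p → ℕ))) := by
  rw [← convexHull_toR_upperClosure, P.upperClosure]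

theorem isClosed_convexHull_toR (P : UpperSet (Fin p → ℕ)) :
    IsClosed (convexHull ℝ (toR '' (P : Set (Fin p → ℕ)))) := by
  rw [← upperClosure_setOf_minimal_mem P, convexHull_toR_upperClosure]
  exact isClosed_Ici.add_left_of_isCompact
    (((finite_setOf_minimal_mem _).image _).isCompact_convexHull ℝ)

end Convexity

section NewtonPolyhedron

variable {x : Fin p → R} [(span (range x)).IsPrime]

theorem isUpperSet_biUnion_supp (hx : PermWeaklyRegular x) (I : Ideal R) :
    IsUpperSet (⋃ g ∈ (I : Set R), supp x g) := by
  intro c b hcb hc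
  obtain ⟨g, hg, hc⟩ := mem_iUnion₂.1 hc
  rw [← add_tsub_cancel_of_le hcb]
  exact mem_iUnion₂.2 ⟨_, mul_mem_left I _ hg, add_mem_supp_mono_mul hx hc _⟩

variable [IsNoetherianRing (Localization.AtPrime (span (range x)))]

theorem toR_mem_ΓI_of_mem_supp_of_mem_intClosure (hx : PermWeaklyRegular x) {I : Ideal R} {f : R}
    (hf : f ∈ intClosure I) {a : Fin p → ℕ} (ha : a ∈ supp x f) : toR a ∈ ΓI x I := by
  by_contra hcon
  let P : UpperSet (Fin p → ℕ) := ⟨_, isUpperSet_biUnion_supp hx I⟩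
  obtain ⟨w, hw, hsep⟩ := exists_nonneg_forall_dotProduct_lt (convex_convexHull ℝ _)
    (isClosed_convexHull_toR P) (convexHull_toR_add_Ici_subset P) hcon
  obtain ⟨g, hg, c, hc, hca⟩ := exists_mem_supp_le_of_mem_intClosure hx
    (lexWeight_monotone hw) (lexWeight_injective w) hf ha
  have hcP : toR c ∈ convexHull ℝ (toR '' (P : Set (Fin p → ℕ))) :=
    subset_convexHull ℝ _ (mem_image_of_mem _ (mem_iUnion₂.2 ⟨g, hg, hc⟩))
  exact (hsep _ hcP).not_ge (dotProduct_le_of_lexWeight_le hca)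

theorem newtonPolyhedron_intClosure_subset_general (hx : PermWeaklyRegular x) (I : Ideal R) :
    Γ x (intClosure I) ⊆ Γ x (intClosure (idealZero x I)) := by
  refine convexHull_mono (image_mono (iUnion₂_subset fun f hf a ha ↦ ?_))
  have hmem : mono x a ∈ idealZero x I :=
    subset_span (mem_image_of_mem _ (toR_mem_ΓI_of_mem_supp_of_mem_intClosure hx hf ha))
  exact mem_iUnion₂.2 ⟨mono x a, subset_intClosure _ hmem, mem_supp_mono hx a⟩

end NewtonPolyhedron

/-- `Γ_x(I̅) ⊆ Γ_x(overline{I₀})`. -/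
theorem newtonPolyhedron_intClosure_subset {R : Type*} [CommRing R] {p : ℕ}
    (x : Fin p → R) (hR : IsRegularDomain R) (hx : IsGRSOP x) (I : Ideal R) :
    Γ x (intClosure I) ⊆ Γ x (intClosure (idealZero x I)) := by
  have hprime : (span (range x)).IsPrime := by
    rw [← image_univ, ← Ideal.Quotient.isDomain_iff_prime]
    exact (hx.2 univ).1
  have hnoeth : IsNoetherianRing (Localization.AtPrime (span (range x))) := (hR.2 _ hprime).1
  exact newtonPolyhedron_intClosure_subset_general (permWeaklyRegular_of_forall_perm hx.1) I

end NND
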